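/- Let K be a field and n ≥ 2 an integer. Let α_1, …, α_n and β_1, …, β_n be nonzero elements of K such that α_1 + ⋯ + α_n = β_1 + ⋯ + β_n, no nonempty subsum of α_1 + ⋯ + α_n vanishes, no nonempty subsum of β_1 + ⋯ + β_n vanishes, the α_i are pairwise distinct, the β_j are pairwise distinct, and {α_1, …, α_n} ≠ {β_1, …, β_n} as sets. Then there exist subsets I, J ⊆ {1, …, n} with |I| ≥ 2 such that ∑_{i ∈ I} α_i − ∑_{j ∈ J} β_j = 0 and no proper subsum of ∑_{i ∈ I} α_i − ∑_{j ∈ J} β_j vanishes (i.e., for all I' ⊆ I, J' ⊆ J with (I', J') ≠ (∅, ∅) and (I', J') ≠ (I, J), one has ∑_{i ∈ I'} α_i − ∑_{j ∈ J'} β_j ≠ 0). -/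

import Mathlib

/-!
The full relation `∑ α = ∑ β` splits into minimal vanishing relations. In each of them both sides
are nonempty, because neither the `α`'s nor the `β`'s have a vanishing nonempty subsum. If every
minimal relation had at most one `α`, then each block would consist of one `α` and at least one
`β`; since there are `n` of each, every block would read `α i = β j`, so the two sets of values
would coincide. The lemma `card_le_and_image_eq_of_sum_eq` carries this count by induction on the
size of the relation, without constructing the partition explicitly.
-/

/-- If every minimal vanishing relation has at most one term on the `α` side, then every vanishing
relation has at least as many `β`'s as `α`'s, and in case of equality the `α`'s and `β`'s
involved are the same elements. A non-minimal relation splits into a proper vanishing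
subrelation and its complement, to which induction on `m` applies. -/
theorem card_le_and_image_eq_of_sum_eq {K ι : Type*} [Field K] [DecidableEq ι] (α β : ι → K)
    (hαsub : ∀ I : Finset ι, I.Nonempty → ∑ i ∈ I, α i ≠ 0)
    (hβsub : ∀ J : Finset ι, J.Nonempty → ∑ j ∈ J, β j ≠ 0)
    (hmin : ∀ I J : Finset ι, 2 ≤ I.card → ∑ i ∈ I, α i - ∑ j ∈ J, β j = 0 →
      ∃ I' J' : Finset ι, I' ⊆ I ∧ J' ⊆ J ∧ ¬(I' = ∅ ∧ J' = ∅) ∧ ¬(I' = I ∧ J' = J) ∧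
        ∑ i ∈ I', α i - ∑ j ∈ J', β j = 0) (m : ℕ) :
    ∀ I J : Finset ι, I.card + J.card = m → ∑ i ∈ I, α i - ∑ j ∈ J, β j = 0 →
      I.card ≤ J.card ∧ (I.card = J.card → α '' (I : Set ι) = β '' (J : Set ι)) := by
  induction m using Nat.strong_induction_on with
  | _ m ih =>
  intro I J hm h
  by_cases h2 : 2 ≤ I.card
  · obtain ⟨I', J', hI, hJ, h0, h1, hs⟩ := hmin I J h2 h
    have hs' : ∑ i ∈ I \ I', α i - ∑ j ∈ J \ J', β j = 0 := by
      rw [← Finset.sum_sdiff hI, ← Finset.sum_sdiff hJ] at h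
      linear_combination h - hs
    have cI := Finset.card_sdiff_add_card_eq_card hI
    have cJ := Finset.card_sdiff_add_card_eq_card hJ
    have p0 : 0 < I'.card + J'.card := by
      by_contra hc
      exact h0 ⟨Finset.card_eq_zero.1 (by omega), Finset.card_eq_zero.1 (by omega)⟩
    have p1 : I'.card + J'.card < I.card + J.card := by
      by_contra hc
      exact h1 ⟨Finset.eq_of_subset_of_card_le hI (by omega),
        Finset.eq_of_subset_of_card_le hJ (by omega)⟩
    obtain ⟨a1, a2⟩ := ih _ (by omega) I' J' rfl hs
    obtain ⟨b1, b2⟩ := ih _ (by omega) (I \ I') (J \ J') rfl hs'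
    refine ⟨by omega, fun he => ?_⟩
    rw [← Finset.sdiff_union_of_subset hI, ← Finset.sdiff_union_of_subset hJ,
      Finset.coe_union, Finset.coe_union, Set.image_union, Set.image_union,
      a2 (by omega), b2 (by omega)]
  · rcases I.eq_empty_or_nonempty with rfl | hI
    · rcases J.eq_empty_or_nonempty with rfl | hJ
      · simp
      · exact absurd (by simpa using h) (hβsub J hJ)
    · rcases J.eq_empty_or_nonempty with rfl | hJ
      · exact absurd (by simpa using h) (hαsub I hI)
      · have := hI.card_pos
        have := hJ.card_pos
        refine ⟨by omega, fun he => ?_⟩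
        obtain ⟨i, rfl⟩ := Finset.card_eq_one.1 (show I.card = 1 by omega)
        obtain ⟨j, rfl⟩ := Finset.card_eq_one.1 (show J.card = 1 by omega)
        simp only [Finset.sum_singleton, sub_eq_zero] at h
        simp [h]


/-- If `α 1 + ⋯ + α n = β 1 + ⋯ + β n` for nonzero, pairwise distinct elements of a field
with no vanishing nonempty subsums on either side, and the sets `{α i}` and `{β j}` differ,
then there are subsets `I, J ⊆ {1, …, n}` with `|I| ≥ 2` such that
`∑_{i ∈ I} α i - ∑_{j ∈ J} β j = 0` and no proper subsum of this relation vanishes. -/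
theorem exists_minimal_vanishing_mixed_subsum
    (K : Type*) [Field K] (n : ℕ) (hn : 2 ≤ n) (α β : Fin n → K)
    (hα0 : ∀ i, α i ≠ 0) (hβ0 : ∀ j, β j ≠ 0)
    (hsum : ∑ i, α i = ∑ j, β j)
    (hαsub : ∀ I : Finset (Fin n), I.Nonempty → ∑ i ∈ I, α i ≠ 0)
    (hβsub : ∀ J : Finset (Fin n), J.Nonempty → ∑ j ∈ J, β j ≠ 0)
    (hαinj : Function.Injective α) (hβinj : Function.Injective β)
    (hne : Set.range α ≠ Set.range β) :
    ∃ I J : Finset (Fin n), 2 ≤ I.card ∧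
      ∑ i ∈ I, α i - ∑ j ∈ J, β j = 0 ∧
      ∀ I' J' : Finset (Fin n), I' ⊆ I → J' ⊆ J →
        ¬(I' = ∅ ∧ J' = ∅) → ¬(I' = I ∧ J' = J) →
        ∑ i ∈ I', α i - ∑ j ∈ J', β j ≠ 0 := by
  by_contra! hcon
  apply hne
  have key := (card_le_and_image_eq_of_sum_eq α β hαsub hβsub (fun I J h2 h => by
    obtain ⟨I', J', a, b, c, d, e⟩ := hcon I J h2 h
    exact ⟨I', J', a, b, fun hc => absurd hc.2 (by grind), fun hd => absurd hd.2 (by grind), e⟩)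
    _ Finset.univ Finset.univ rfl (sub_eq_zero.2 hsum)).2 rfl
  simpa using key
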